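/- Under the same hypotheses (commuting pairs (H₁⁰,H₂⁰), (H₁,H₂) with H_j − H_j⁰ ∈ B₂(𝓗), and finite-dimensional commuting approximants H_j^{0(N)}, H_j^{(N)} with projections P_N⁰, P_N from the Weyl–von Neumann–Berg construction), for all integers k, l ≥ 1: lim_{N→∞} Tr{ P_N⁰[(H₂⁰)^k − (H₂)^k] P_N [(H₁)^l − (H₁⁰)^l] P_N⁰ } = lim_{N→∞} Tr{ P_N⁰[(H₂^{0(N)})^k − (H₂^{(N)})^k] P_N [(H₁^{(N)})^l − (H₁^{0(N)})^l] P_N⁰ } (both limits exist and are equal). -/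

import Mathlib

open MeasureTheory Filter Topology

noncomputable section

/-- The trace computed along a Hilbert basis: `Tr T = Σ_i ⟪b i, T (b i)⟫`. -/
def traceAlong {H : Type*} [NormedAddCommGroup H] [InnerProductSpace ℂ H] [CompleteSpace H]
    {ι : Type*} (b : HilbertBasis ι ℂ H) (T : H →L[ℂ] H) : ℂ :=
  ∑' i, (inner ℂ (b i) (T (b i)) : ℂ)

/-- The Schatten `p`-norm `‖T‖_p = (Tr |T|^p)^{1/p}`, via the functional calculus
`|T|^p = f(T*T)`, `f(t) = |t|^{p/2}`, with the trace computed along the basis `b`. -/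
def schattenNorm {H : Type*} [NormedAddCommGroup H] [InnerProductSpace ℂ H] [CompleteSpace H]
    {ι : Type*} (b : HilbertBasis ι ℂ H) (p : ℝ) (T : H →L[ℂ] H) : ℝ :=
  (∑' i, (inner ℂ (b i)
      ((cfc (fun t : ℝ => |t| ^ (p / 2)) (ContinuousLinearMap.adjoint T * T)) (b i)) : ℂ).re)
    ^ (1 / p)

section Helpers

open scoped ENNReal

variable {H : Type*} [NormedAddCommGroup H] [InnerProductSpace ℂ H] [CompleteSpace H]

/-- The Hilbert–Schmidt norm along `b`, as an extended nonnegative real. -/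
def hsn (b : HilbertBasis ℕ ℂ H) (T : H →L[ℂ] H) : ℝ≥0∞ :=
  eLpNorm (fun i => T (b i)) 2 Measure.count

theorem hsn_eq (b : HilbertBasis ℕ ℂ H) (T : H →L[ℂ] H) :
    hsn b T = (∑' i, ‖T (b i)‖ₑ ^ 2) ^ (1 / 2 : ℝ) := by
  unfold hsn
  rw [eLpNorm_eq_lintegral_rpow_enorm_toReal (by norm_num) (by norm_num), lintegral_count]
  simp

theorem hsn_sq (b : HilbertBasis ℕ ℂ H) (T : H →L[ℂ] H) :
    hsn b T ^ 2 = ∑' i, ‖T (b i)‖ₑ ^ 2 := by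
  rw [hsn_eq, ← ENNReal.rpow_natCast, ← ENNReal.rpow_mul]
  norm_num

theorem le_of_sq_le_sq_ennreal {a c : ℝ≥0∞} (h : a ^ 2 ≤ c ^ 2) : a ≤ c := by
  exact (ENNReal.pow_le_pow_left_iff (two_ne_zero)).1 h

theorem enorm_inner_symm' (x y : H) : ‖(inner ℂ x y : ℂ)‖ₑ = ‖(inner ℂ y x : ℂ)‖ₑ := by
  rw [← ofReal_norm, ← ofReal_norm, norm_inner_symm]

theorem summable_nnnorm_sq_iff (f : ℕ → H) :
    (Summable fun i => ‖f i‖₊ ^ 2) ↔ Summable fun i => ‖f i‖ ^ 2 := by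
  rw [← NNReal.summable_coe]
  simp

theorem parseval (b : HilbertBasis ℕ ℂ H) (x : H) :
    ‖x‖ₑ ^ 2 = ∑' j, ‖(inner ℂ (b j) x : ℂ)‖ₑ ^ 2 := by
  have h := b.hasSum_inner_mul_inner x x
  have h2 : HasSum (fun j => ‖(inner ℂ (b j) x : ℂ)‖ ^ 2) (‖x‖ ^ 2) := by
    have := Complex.hasSum_re h
    convert this using 1
    · ext j
      rw [← inner_conj_symm x, ← Complex.normSq_eq_conj_mul_self, Complex.ofReal_re,
        Complex.normSq_eq_norm_sq]
    · rw [inner_self_eq_norm_sq_to_K]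
      norm_cast
  have h3 := ENNReal.ofReal_tsum_of_nonneg (fun j => by positivity) h2.summable
  rw [h2.tsum_eq] at h3
  simpa [ENNReal.ofReal_pow, ofReal_norm] using h3

theorem hsn_adjoint (b : HilbertBasis ℕ ℂ H) (T : H →L[ℂ] H) :
    hsn b (star T) = hsn b T := by
  rw [hsn_eq, hsn_eq]
  congr 1
  simp_rw [parseval b]
  rw [ENNReal.tsum_comm]
  refine tsum_congr fun i => tsum_congr fun j => ?_
  rw [ContinuousLinearMap.star_eq_adjoint, ContinuousLinearMap.adjoint_inner_right,
    enorm_inner_symm']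

theorem hsn_add_le (b : HilbertBasis ℕ ℂ H) (S T : H →L[ℂ] H) :
    hsn b (S + T) ≤ hsn b S + hsn b T := by
  unfold hsn
  exact eLpNorm_add_le (f := fun i => S (b i)) (g := fun i => T (b i))
    (StronglyMeasurable.of_discrete).aestronglyMeasurable
    (StronglyMeasurable.of_discrete).aestronglyMeasurable (by norm_num)

theorem hsn_neg (b : HilbertBasis ℕ ℂ H) (T : H →L[ℂ] H) :
    hsn b (-T) = hsn b T := by
  simp [hsn_eq]

theorem hsn_sub_le (b : HilbertBasis ℕ ℂ H) (S T : H →L[ℂ] H) :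
    hsn b (S - T) ≤ hsn b S + hsn b T := by
  rw [sub_eq_add_neg, ← hsn_neg b T]
  exact hsn_add_le b _ _

theorem hsn_mul_left (b : HilbertBasis ℕ ℂ H) (A T : H →L[ℂ] H) :
    hsn b (A * T) ≤ ENNReal.ofReal ‖A‖ * hsn b T := by
  unfold hsn
  apply eLpNorm_le_mul_eLpNorm_of_ae_le_mul
  exact ae_of_all _ fun i => A.le_opNorm _

theorem hsn_mul_right (b : HilbertBasis ℕ ℂ H) (T A : H →L[ℂ] H) :
    hsn b (T * A) ≤ hsn b T * ENNReal.ofReal ‖A‖ := by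
  rw [← hsn_adjoint b (T * A), star_mul, ← hsn_adjoint b T, mul_comm, ← norm_star A]
  exact hsn_mul_left b _ _

theorem hsn_mul_le (b : HilbertBasis ℕ ℂ H) (S T : H →L[ℂ] H) :
    hsn b (S * T) ≤ hsn b S * hsn b T := by
  apply le_of_sq_le_sq_ennreal
  rw [mul_pow, ← hsn_adjoint b S, hsn_sq, hsn_sq, hsn_sq, ← ENNReal.tsum_mul_left]
  refine ENNReal.tsum_le_tsum fun i => ?_
  rw [parseval b, ← ENNReal.tsum_mul_right]
  refine ENNReal.tsum_le_tsum fun j => ?_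
  rw [← mul_pow]
  gcongr
  rw [ContinuousLinearMap.star_eq_adjoint, mul_apply_eq_comp,
    ← ContinuousLinearMap.adjoint_inner_left]
  have := norm_inner_le_norm (𝕜 := ℂ) (ContinuousLinearMap.adjoint S (b j)) (T (b i))
  simp only [enorm_eq_nnnorm]
  exact_mod_cast this

theorem tsum_enorm_le (b : HilbertBasis ℕ ℂ H) (S T : H →L[ℂ] H) :
    ∑' i, ‖(inner ℂ (b i) ((S * T) (b i)) : ℂ)‖ₑ ≤ hsn b S * hsn b T := by
  have h := ENNReal.lintegral_mul_le_Lp_mul_Lq (Measure.count : Measure ℕ)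
    (Real.HolderConjugate.two_two) (f := fun i => ‖star S (b i)‖ₑ) (g := fun i => ‖T (b i)‖ₑ)
    (measurable_from_nat.aemeasurable) (measurable_from_nat.aemeasurable)
  simp only [lintegral_count, ENNReal.rpow_two] at h
  rw [← hsn_adjoint b S, hsn_eq, hsn_eq]
  refine le_trans (ENNReal.tsum_le_tsum fun i => ?_) h
  rw [ContinuousLinearMap.star_eq_adjoint, mul_apply_eq_comp,
    ← ContinuousLinearMap.adjoint_inner_left]
  have := norm_inner_le_norm (𝕜 := ℂ) (ContinuousLinearMap.adjoint S (b i)) (T (b i))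
  simp only [enorm_eq_nnnorm, Pi.mul_apply]
  exact_mod_cast this

theorem enorm_trace_le (b : HilbertBasis ℕ ℂ H) (S T : H →L[ℂ] H) :
    ‖traceAlong b (S * T)‖ₑ ≤ hsn b S * hsn b T :=
  enorm_tsum_le_tsum_enorm.trans (tsum_enorm_le b S T)

theorem summable_trace (b : HilbertBasis ℕ ℂ H) (S T : H →L[ℂ] H)
    (hS : hsn b S ≠ ⊤) (hT : hsn b T ≠ ⊤) :
    Summable fun i => (inner ℂ (b i) ((S * T) (b i)) : ℂ) := by
  have h : ∑' i, ‖(inner ℂ (b i) ((S * T) (b i)) : ℂ)‖ₑ ≠ ⊤ :=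
    ne_top_of_le_ne_top (ENNReal.mul_ne_top hS hT) (tsum_enorm_le b S T)
  simp only [enorm_eq_nnnorm] at h
  rw [ENNReal.tsum_coe_ne_top_iff_summable] at h
  exact h.of_nnnorm

theorem trace_tendsto (b : HilbertBasis ℕ ℂ H) (S T : ℕ → H →L[ℂ] H) (S' T' : H →L[ℂ] H)
    (hS' : hsn b S' ≠ ⊤) (hT' : hsn b T' ≠ ⊤)
    (hS : Tendsto (fun N => hsn b (S N - S')) atTop (𝓝 0))
    (hT : Tendsto (fun N => hsn b (T N - T')) atTop (𝓝 0)) :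
    Tendsto (fun N => traceAlong b (S N * T N)) atTop (𝓝 (traceAlong b (S' * T'))) := by
  rw [tendsto_iff_edist_tendsto_0]
  have hlim : Tendsto (fun N => hsn b (S N - S') * (hsn b (T N - T') + hsn b T')
      + hsn b S' * hsn b (T N - T')) atTop (𝓝 (0 * (0 + hsn b T') + hsn b S' * 0)) := by
    refine Tendsto.add ?_ ?_
    · exact ENNReal.Tendsto.mul hS (Or.inr (by simpa using hT')) (hT.add_const _)
        (Or.inr (by simp))
    · exact ENNReal.Tendsto.const_mul hT (Or.inr hS')
  rw [zero_mul, mul_zero, zero_add] at hlim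
  refine tendsto_of_tendsto_of_tendsto_of_le_of_le' tendsto_const_nhds hlim
    (Eventually.of_forall fun _ => zero_le) ?_
  filter_upwards [hS.eventually (gt_mem_nhds (show (0 : ℝ≥0∞) < 1 by simp)),
    hT.eventually (gt_mem_nhds (show (0 : ℝ≥0∞) < 1 by simp))] with N h1 h2
  have e1 : hsn b (S N - S') ≠ ⊤ := (h1.trans ENNReal.one_lt_top).ne
  have e2 : hsn b (T N - T') ≠ ⊤ := (h2.trans ENNReal.one_lt_top).ne
  have e3 : hsn b (T N) ≤ hsn b (T N - T') + hsn b T' := by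
    simpa using hsn_add_le b (T N - T') T'
  have e4 : hsn b (T N) ≠ ⊤ := ne_top_of_le_ne_top (ENNReal.add_ne_top.2 ⟨e2, hT'⟩) e3
  have key : traceAlong b (S N * T N) = traceAlong b ((S N - S') * T N)
      + traceAlong b (S' * (T N - T')) + traceAlong b (S' * T') := by
    unfold traceAlong
    rw [← (summable_trace b _ _ e1 e4).tsum_add (summable_trace b _ _ hS' e2),
      ← ((summable_trace b _ _ e1 e4).add (summable_trace b _ _ hS' e2)).tsum_add
        (summable_trace b _ _ hS' hT')]
    refine tsum_congr fun i => ?_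
    rw [← inner_add_right, ← inner_add_right]
    congr 1
    simp
  rw [edist_eq_enorm_sub, key, add_sub_cancel_right]
  refine (enorm_add_le _ _).trans (add_le_add ?_ (enorm_trace_le b _ _))
  exact (enorm_trace_le b _ _).trans (by gcongr)

theorem cfc_abs_adj (T : H →L[ℂ] H) :
    cfc (fun t : ℝ => |t| ^ ((2 : ℝ) / 2)) (ContinuousLinearMap.adjoint T * T)
      = ContinuousLinearMap.adjoint T * T := by
  have hn : 0 ≤ ContinuousLinearMap.adjoint T * T := by
    rw [← ContinuousLinearMap.star_eq_adjoint]
    exact star_mul_self_nonneg T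
  have hsa : IsSelfAdjoint (ContinuousLinearMap.adjoint T * T) := IsSelfAdjoint.of_nonneg hn
  conv_rhs => rw [← cfc_id' ℝ (ContinuousLinearMap.adjoint T * T)]
  refine cfc_congr fun t ht => ?_
  have := spectrum_nonneg_of_nonneg hn ht
  simp [abs_of_nonneg this]

theorem schatten_two (b : HilbertBasis ℕ ℂ H) (T : H →L[ℂ] H) (hT : hsn b T ≠ ⊤) :
    hsn b T = ENNReal.ofReal (schattenNorm b 2 T) := by
  have hsum : Summable fun i => ‖T (b i)‖ ^ 2 := by
    have h : ∑' i, ‖T (b i)‖ₑ ^ 2 ≠ ⊤ := by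
      rw [← hsn_sq]; exact ENNReal.pow_ne_top hT
    have h' : ∑' i, ((‖T (b i)‖₊ ^ 2 : NNReal) : ℝ≥0∞) ≠ ⊤ := by
      simpa [enorm_eq_nnnorm] using h
    rw [ENNReal.tsum_coe_ne_top_iff_summable] at h'
    exact (summable_nnnorm_sq_iff _).1 h'
  unfold schattenNorm
  rw [cfc_abs_adj, hsn_eq, ← ENNReal.ofReal_rpow_of_nonneg _ (by norm_num)]
  · congr 1
    have : ∀ i, (inner ℂ (b i) ((ContinuousLinearMap.adjoint T * T) (b i)) : ℂ).re
        = ‖T (b i)‖ ^ 2 := by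
      intro i
      rw [mul_apply_eq_comp, ContinuousLinearMap.adjoint_inner_right,
        inner_self_eq_norm_sq_to_K]
      norm_cast
    simp_rw [this]
    rw [ENNReal.ofReal_tsum_of_nonneg (fun _ => by positivity) hsum]
    simp [ENNReal.ofReal_pow, ofReal_norm]
  · refine tsum_nonneg fun i => ?_
    rw [mul_apply_eq_comp, ContinuousLinearMap.adjoint_inner_right,
        inner_self_eq_norm_sq_to_K]
    norm_cast
    exact sq_nonneg _

theorem hsn_ne_top_of_summable (b : HilbertBasis ℕ ℂ H) (T : H →L[ℂ] H)
    (h : Summable fun i => ‖T (b i)‖ ^ 2) : hsn b T ≠ ⊤ := by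
  rw [hsn_eq]
  refine ENNReal.rpow_ne_top_of_nonneg (by norm_num) ?_
  have h' : Summable fun i => ‖T (b i)‖₊ ^ 2 := (summable_nnnorm_sq_iff _).2 h
  have := ENNReal.tsum_coe_ne_top_iff_summable.2 h'
  simpa [enorm_eq_nnnorm] using this

theorem hsn_proj_ne_top (b : HilbertBasis ℕ ℂ H) (P : H →L[ℂ] H) (hP : P * P = P)
    (hsa : IsSelfAdjoint P) (hfin : FiniteDimensional ℂ (LinearMap.range (P : H →ₗ[ℂ] H))) :
    hsn b P ≠ ⊤ := by
  have hsa' : ContinuousLinearMap.adjoint P = P := hsa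
  let e := stdOrthonormalBasis ℂ (LinearMap.range (P : H →ₗ[ℂ] H))
  have hPe : ∀ k, P (e k : H) = e k := by
    intro k
    obtain ⟨y, hy⟩ := (e k).2
    rw [← hy]
    exact congrArg (fun A : H →L[ℂ] H => A y) hP
  have hx : ∀ x, ‖P x‖ₑ ^ 2 = ∑ k, ‖(inner ℂ (e k : H) x : ℂ)‖ₑ ^ 2 := by
    intro x
    have h := e.sum_sq_norm_inner_right ⟨P x, ⟨x, rfl⟩⟩
    have h1 : ∑ k, ‖(inner ℂ (e k : H) x : ℂ)‖ ^ 2 = ‖P x‖ ^ 2 := by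
      rw [show ‖P x‖ = ‖(⟨P x, ⟨x, rfl⟩⟩ : LinearMap.range (P : H →ₗ[ℂ] H))‖ from rfl, ← h]
      refine Finset.sum_congr rfl fun k _ => ?_
      rw [Submodule.coe_inner]
      change _ = ‖(inner ℂ (e k : H) (P x) : ℂ)‖ ^ 2
      rw [← ContinuousLinearMap.adjoint_inner_left, hsa', hPe]
    have h2 := congrArg ENNReal.ofReal h1
    rw [ENNReal.ofReal_sum_of_nonneg (fun _ _ => by positivity)] at h2
    simpa [ENNReal.ofReal_pow, ofReal_norm] using h2.symm
  rw [hsn_eq]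
  refine ENNReal.rpow_ne_top_of_nonneg (by norm_num) ?_
  simp_rw [hx]
  rw [Summable.tsum_finsetSum (fun _ _ => ENNReal.summable)]
  refine ENNReal.sum_ne_top.2 fun k _ => ?_
  have : ∑' i, ‖(inner ℂ (e k : H) (b i) : ℂ)‖ₑ ^ 2 = ‖(e k : H)‖ₑ ^ 2 := by
    rw [parseval b]
    refine tsum_congr fun i => ?_
    rw [enorm_inner_symm']
  rw [this]
  simp

theorem ofReal_norm_proj_le (P : H →L[ℂ] H) (hP : P * P = P) (hsa : IsSelfAdjoint P) :
    ENNReal.ofReal ‖P‖ ≤ 1 := by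
  rw [ENNReal.ofReal_le_one]
  exact IsStarProjection.norm_le P ⟨hP, hsa⟩

theorem hsn_proj_mul (b : HilbertBasis ℕ ℂ H) (P T : H →L[ℂ] H) (hP : P * P = P)
    (hsa : IsSelfAdjoint P) : hsn b (P * T) ≤ hsn b T :=
  (hsn_mul_left b P T).trans (mul_le_of_le_one_left' (ofReal_norm_proj_le P hP hsa))

theorem hsn_mul_proj (b : HilbertBasis ℕ ℂ H) (P T : H →L[ℂ] H) (hP : P * P = P)
    (hsa : IsSelfAdjoint P) : hsn b (T * P) ≤ hsn b T :=
  (hsn_mul_right b T P).trans (mul_le_of_le_one_right' (ofReal_norm_proj_le P hP hsa))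

theorem squeeze0 {f g : ℕ → ℝ≥0∞} (hg : Tendsto g atTop (𝓝 0)) (h : ∀ N, f N ≤ g N) :
    Tendsto f atTop (𝓝 0) :=
  tendsto_of_tendsto_of_tendsto_of_le_of_le tendsto_const_nhds hg (fun _ => zero_le) h

theorem add0 {f g : ℕ → ℝ≥0∞} (hf : Tendsto f atTop (𝓝 0)) (hg : Tendsto g atTop (𝓝 0)) :
    Tendsto (fun N => f N + g N) atTop (𝓝 0) := by
  simpa using hf.add hg

/-- `P_N X → X` in Hilbert–Schmidt norm. -/
theorem proj_mul_tendsto (b : HilbertBasis ℕ ℂ H) (P : ℕ → H →L[ℂ] H)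
    (hP : ∀ N, P N * P N = P N) (hsa : ∀ N, IsSelfAdjoint (P N))
    (hlim : ∀ x : H, Tendsto (fun N => P N x) atTop (𝓝 x)) (X : H →L[ℂ] H)
    (hX : hsn b X ≠ ⊤) :
    Tendsto (fun N => hsn b (P N * X - X)) atTop (𝓝 0) := by
  have h : Tendsto (fun N => ∑' i, ‖(P N * X - X) (b i)‖ₑ ^ 2) atTop (𝓝 0) := by
    have := tendsto_lintegral_of_dominated_convergence (μ := (Measure.count : Measure ℕ))
      (F := fun N i => ‖(P N * X - X) (b i)‖ₑ ^ 2) (f := fun _ => 0)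
      (fun i => (2 * ‖X (b i)‖ₑ) ^ 2) (fun _ => measurable_from_nat)
      (fun N => ae_of_all _ fun i => ?_) ?_ (ae_of_all _ fun i => ?_)
    · simpa [lintegral_count] using this
    · simp only [sub_apply, mul_apply_eq_comp]
      gcongr
      refine (enorm_sub_le).trans ?_
      rw [two_mul]
      gcongr
      have h1 : ‖P N (X (b i))‖ ≤ ‖X (b i)‖ := by
        refine ((P N).le_opNorm _).trans ?_
        exact mul_le_of_le_one_left (norm_nonneg _) (IsStarProjection.norm_le _ ⟨hP N, hsa N⟩)
      simp only [enorm_eq_nnnorm]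
      exact_mod_cast h1
    · rw [lintegral_count]
      simp_rw [mul_pow]
      rw [ENNReal.tsum_mul_left, ← hsn_sq]
      exact ENNReal.mul_ne_top (by norm_num) (ENNReal.pow_ne_top hX)
    · have h1 : Tendsto (fun N => (P N * X - X) (b i)) atTop (𝓝 0) := by
        simpa using (hlim (X (b i))).sub_const (X (b i))
      have h2 := ENNReal.Tendsto.pow (n := 2) h1.enorm
      simpa using h2
  have h2 := h.ennrpow_const (1 / 2 : ℝ)
  simp_rw [hsn_eq]
  simpa using h2

theorem hsn_star_sub (b : HilbertBasis ℕ ℂ H) (S T : H →L[ℂ] H) :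
    hsn b (star S - star T) = hsn b (S - T) := by
  rw [← star_sub, hsn_adjoint]

theorem mul_proj_tendsto (b : HilbertBasis ℕ ℂ H) (P : ℕ → H →L[ℂ] H)
    (hP : ∀ N, P N * P N = P N) (hsa : ∀ N, IsSelfAdjoint (P N))
    (hlim : ∀ x : H, Tendsto (fun N => P N x) atTop (𝓝 x)) (X : H →L[ℂ] H)
    (hX : hsn b X ≠ ⊤) :
    Tendsto (fun N => hsn b (X * P N - X)) atTop (𝓝 0) := by
  have h := proj_mul_tendsto b P hP hsa hlim (star X) (by rwa [hsn_adjoint])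
  refine h.congr fun N => ?_
  rw [← hsn_star_sub b (X * P N), star_mul, (hsa N).star_eq]

/-- `P_N X Q_N → X` in Hilbert–Schmidt norm. -/
theorem sandwich_tendsto (b : HilbertBasis ℕ ℂ H) (P Q : ℕ → H →L[ℂ] H)
    (hP : ∀ N, P N * P N = P N) (hPsa : ∀ N, IsSelfAdjoint (P N))
    (hPlim : ∀ x : H, Tendsto (fun N => P N x) atTop (𝓝 x))
    (hQ : ∀ N, Q N * Q N = Q N) (hQsa : ∀ N, IsSelfAdjoint (Q N))
    (hQlim : ∀ x : H, Tendsto (fun N => Q N x) atTop (𝓝 x)) (X : H →L[ℂ] H)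
    (hX : hsn b X ≠ ⊤) :
    Tendsto (fun N => hsn b (P N * X * Q N - X)) atTop (𝓝 0) := by
  refine squeeze0 (add0 (mul_proj_tendsto b Q hQ hQsa hQlim X hX)
    (proj_mul_tendsto b P hP hPsa hPlim X hX)) fun N => ?_
  have : P N * X * Q N - X = P N * (X * Q N - X) + (P N * X - X) := by noncomm_ring
  rw [this]
  exact (hsn_add_le b _ _).trans (add_le_add (hsn_proj_mul b _ _ (hP N) (hPsa N)) le_rfl)

theorem pow_sub_ne_top (b : HilbertBasis ℕ ℂ H) (A B : H →L[ℂ] H) (h : hsn b (A - B) ≠ ⊤)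
    (k : ℕ) : hsn b (A ^ k - B ^ k) ≠ ⊤ := by
  induction k with
  | zero => simp [hsn_eq]
  | succ k ih =>
    have : A ^ (k + 1) - B ^ (k + 1) = (A ^ k - B ^ k) * A + B ^ k * (A - B) := by
      rw [pow_succ, pow_succ]; noncomm_ring
    rw [this]
    refine ne_top_of_le_ne_top ?_ ((hsn_add_le b _ _).trans
      (add_le_add (hsn_mul_right b _ _) (hsn_mul_left b _ _)))
    exact ENNReal.add_ne_top.2 ⟨ENNReal.mul_ne_top ih ENNReal.ofReal_ne_top,
      ENNReal.mul_ne_top ENNReal.ofReal_ne_top h⟩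

/-- `P_N K^k - P_N K_N^k → 0` in Hilbert–Schmidt norm. -/
theorem pow_approx (b : HilbertBasis ℕ ℂ H) (P : ℕ → H →L[ℂ] H)
    (hP : ∀ N, P N * P N = P N) (hsa : ∀ N, IsSelfAdjoint (P N))
    (hfin : ∀ N, FiniteDimensional ℂ (LinearMap.range (P N : H →ₗ[ℂ] H)))
    (K : H →L[ℂ] H) (KN : ℕ → H →L[ℂ] H) (hKN : ∀ N, IsSelfAdjoint (KN N))
    (hsub : ∀ N, P N * KN N * P N = KN N * P N)
    (h1 : Tendsto (fun N => schattenNorm b 2 (K * P N - P N * K)) atTop (𝓝 0))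
    (h2 : Tendsto (fun N => schattenNorm b 2 (P N * K * P N - KN N * P N)) atTop (𝓝 0))
    (k : ℕ) : Tendsto (fun N => hsn b (P N * K ^ k - P N * KN N ^ k)) atTop (𝓝 0) := by
  have hPt : ∀ N, hsn b (P N) ≠ ⊤ := fun N => hsn_proj_ne_top b _ (hP N) (hsa N) (hfin N)
  have hl : ∀ N A, hsn b (A * P N) ≠ ⊤ := fun N A => ne_top_of_le_ne_top
    (ENNReal.mul_ne_top ENNReal.ofReal_ne_top (hPt N)) (hsn_mul_left b A (P N))
  have hr : ∀ N A, hsn b (P N * A) ≠ ⊤ := fun N A => ne_top_of_le_ne_top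
    (ENNReal.mul_ne_top (hPt N) ENNReal.ofReal_ne_top) (hsn_mul_right b (P N) A)
  have hs : ∀ A B, hsn b A ≠ ⊤ → hsn b B ≠ ⊤ → hsn b (A - B) ≠ ⊤ := fun A B hA hB =>
    ne_top_of_le_ne_top (ENNReal.add_ne_top.2 ⟨hA, hB⟩) (hsn_sub_le b A B)
  have h1' : Tendsto (fun N => hsn b (K * P N - P N * K)) atTop (𝓝 0) := by
    simp_rw [fun N => schatten_two b _ (hs _ _ (hl N K) (hr N K))]
    simpa using ENNReal.tendsto_ofReal h1
  have h2' : Tendsto (fun N => hsn b (P N * K * P N - KN N * P N)) atTop (𝓝 0) := by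
    simp_rw [fun N => schatten_two b _ (hs _ _ (hl N (P N * K)) (hl N (KN N)))]
    simpa using ENNReal.tendsto_ofReal h2
  have hcom : ∀ N, Commute (P N) (KN N) := fun N => by
    have h := congrArg star (hsub N)
    simp only [star_mul, (hsa N).star_eq, (hKN N).star_eq] at h
    rw [← mul_assoc, hsub N] at h
    exact h.symm
  have hD : Tendsto (fun N => hsn b (P N * K - P N * KN N)) atTop (𝓝 0) := by
    refine squeeze0 (add0 h1' h2') fun N => ?_
    have : P N * K - P N * KN N = P N * (-(K * P N - P N * K))
        + (P N * K * P N - KN N * P N) := by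
      rw [← (hcom N).eq]
      have e : P N * (-(K * P N - P N * K)) = P N * P N * K - P N * K * P N := by noncomm_ring
      rw [e, hP N]; abel
    rw [this]
    refine (hsn_add_le b _ _).trans (add_le_add ?_ le_rfl)
    refine (hsn_proj_mul b _ _ (hP N) (hsa N)).trans ?_
    rw [hsn_neg]
  induction k with
  | zero => simp [hsn_eq]
  | succ k ih =>
    have hg : Tendsto (fun N => hsn b (P N * K ^ k - P N * KN N ^ k) * ENNReal.ofReal ‖K‖
        + (ENNReal.ofReal ‖K ^ k‖ * hsn b (P N * K - P N * KN N)
        + hsn b (P N * K ^ k - P N * KN N ^ k) * hsn b (P N * K - P N * KN N))) atTop (𝓝 0) := by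
      refine add0 ?_ (add0 ?_ ?_)
      · simpa using ENNReal.Tendsto.mul_const ih (Or.inr (ENNReal.ofReal_ne_top (r := ‖K‖)))
      · simpa using ENNReal.Tendsto.const_mul hD (Or.inr (ENNReal.ofReal_ne_top (r := ‖K ^ k‖)))
      · simpa using ENNReal.Tendsto.mul ih (Or.inr ENNReal.zero_ne_top) hD
          (Or.inr ENNReal.zero_ne_top)
    refine squeeze0 hg fun N => ?_
    have hck : P N * KN N ^ k = P N * KN N ^ k * P N := by
      rw [mul_assoc, ← ((hcom N).pow_right k).eq, ← mul_assoc, hP N]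
    have : P N * K ^ (k + 1) - P N * KN N ^ (k + 1)
        = (P N * K ^ k - P N * KN N ^ k) * K
          + (P N * (K ^ k * (P N * K - P N * KN N))
            - (P N * K ^ k - P N * KN N ^ k) * (P N * K - P N * KN N)) := by
      have e : (P N * (K ^ k * (P N * K - P N * KN N))
            - (P N * K ^ k - P N * KN N ^ k) * (P N * K - P N * KN N))
          = (P N * KN N ^ k * P N) * (K - KN N) := by noncomm_ring
      rw [e, ← hck, pow_succ, pow_succ]
      noncomm_ring
    rw [this]
    refine (hsn_add_le b _ _).trans (add_le_add (hsn_mul_right b _ _) ?_)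
    refine (hsn_sub_le b _ _).trans (add_le_add ?_ (hsn_mul_le b _ _))
    exact (hsn_proj_mul b _ _ (hP N) (hsa N)).trans (hsn_mul_left b _ _)

theorem pow_approx' (b : HilbertBasis ℕ ℂ H) (P : ℕ → H →L[ℂ] H)
    (hsa : ∀ N, IsSelfAdjoint (P N))
    (K : H →L[ℂ] H) (hK : IsSelfAdjoint K) (KN : ℕ → H →L[ℂ] H)
    (hKN : ∀ N, IsSelfAdjoint (KN N)) (k : ℕ)
    (h : Tendsto (fun N => hsn b (P N * K ^ k - P N * KN N ^ k)) atTop (𝓝 0)) :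
    Tendsto (fun N => hsn b (K ^ k * P N - KN N ^ k * P N)) atTop (𝓝 0) := by
  refine h.congr fun N => ?_
  rw [← hsn_star_sub b (P N * K ^ k)]
  simp only [star_mul, star_pow, (hsa N).star_eq, hK.star_eq, (hKN N).star_eq]

/-- Assembling one factor. -/
theorem factor_tendsto (b : HilbertBasis ℕ ℂ H) (P Q : ℕ → H →L[ℂ] H)
    (hP : ∀ N, P N * P N = P N) (hPsa : ∀ N, IsSelfAdjoint (P N))
    (hQ : ∀ N, Q N * Q N = Q N) (hQsa : ∀ N, IsSelfAdjoint (Q N))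
    (A B : H →L[ℂ] H) (AN BN : ℕ → H →L[ℂ] H)
    (hX : Tendsto (fun N => hsn b (P N * (A - B) * Q N - (A - B))) atTop (𝓝 0))
    (hA : Tendsto (fun N => hsn b (P N * A - P N * AN N)) atTop (𝓝 0))
    (hB : Tendsto (fun N => hsn b (B * Q N - BN N * Q N)) atTop (𝓝 0)) :
    Tendsto (fun N => hsn b (P N * (AN N - BN N) * Q N - (A - B))) atTop (𝓝 0) := by
  refine squeeze0 (add0 hX (add0 hA hB)) fun N => ?_
  have : P N * (AN N - BN N) * Q N - (A - B) = (P N * (A - B) * Q N - (A - B))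
      + (P N * (B * Q N - BN N * Q N) - (P N * A - P N * AN N) * Q N) := by noncomm_ring
  rw [this, add_comm (hsn b (P N * A - P N * AN N))]
  refine (hsn_add_le b _ _).trans (add_le_add le_rfl ?_)
  exact (hsn_sub_le b _ _).trans (add_le_add (hsn_proj_mul b _ _ (hP N) (hPsa N))
    (hsn_mul_proj b _ _ (hQ N) (hQsa N)))

end Helpers

/-- Under the same hypotheses, for all `k, l ≥ 1` the limits
`lim_N Tr{P_N⁰[(H₂⁰)^k − (H₂)^k] P_N [(H₁)^l − (H₁⁰)^l] P_N⁰}` and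
`lim_N Tr{P_N⁰[(H₂^{0(N)})^k − (H₂^{(N)})^k] P_N [(H₁^{(N)})^l − (H₁^{0(N)})^l] P_N⁰}`
both exist and are equal. -/
theorem stmt16
 {H : Type*} [NormedAddCommGroup H] [InnerProductSpace ℂ H] [CompleteSpace H]
    [TopologicalSpace.SeparableSpace H]
    (b : HilbertBasis ℕ ℂ H)
    (H10 H20 H1 H2 : H →L[ℂ] H)
    (h10sa : IsSelfAdjoint H10) (h20sa : IsSelfAdjoint H20)
    (h1sa : IsSelfAdjoint H1) (h2sa : IsSelfAdjoint H2)
    (hcomm0 : Commute H10 H20) (hcomm : Commute H1 H2)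
    (hV1 : Summable fun i => ‖(H1 - H10) (b i)‖ ^ 2)
    (hV2 : Summable fun i => ‖(H2 - H20) (b i)‖ ^ 2)
    (P0 P : ℕ → H →L[ℂ] H)
    (hP0proj : ∀ N, P0 N * P0 N = P0 N) (hP0sa : ∀ N, IsSelfAdjoint (P0 N))
    (hP0fin : ∀ N, FiniteDimensional ℂ (LinearMap.range (P0 N : H →ₗ[ℂ] H)))
    (hP0mono : ∀ N, LinearMap.range (P0 N : H →ₗ[ℂ] H)
      ≤ LinearMap.range (P0 (N + 1) : H →ₗ[ℂ] H))
    (hP0lim : ∀ x : H, Tendsto (fun N => P0 N x) atTop (𝓝 x))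
    (hPproj : ∀ N, P N * P N = P N) (hPsa : ∀ N, IsSelfAdjoint (P N))
    (hPfin : ∀ N, FiniteDimensional ℂ (LinearMap.range (P N : H →ₗ[ℂ] H)))
    (hPmono : ∀ N, LinearMap.range (P N : H →ₗ[ℂ] H)
      ≤ LinearMap.range (P (N + 1) : H →ₗ[ℂ] H))
    (hPlim : ∀ x : H, Tendsto (fun N => P N x) atTop (𝓝 x))
    (H10N H20N H1N H2N : ℕ → H →L[ℂ] H)
    (h10Nsa : ∀ N, IsSelfAdjoint (H10N N)) (h20Nsa : ∀ N, IsSelfAdjoint (H20N N))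
    (h1Nsa : ∀ N, IsSelfAdjoint (H1N N)) (h2Nsa : ∀ N, IsSelfAdjoint (H2N N))
    (hcomm0N : ∀ N, Commute (H10N N) (H20N N)) (hcommN : ∀ N, Commute (H1N N) (H2N N))
    (hsub0 : ∀ N, P0 N * H10N N * P0 N = H10N N * P0 N
      ∧ P0 N * H20N N * P0 N = H20N N * P0 N)
    (hsub : ∀ N, P N * H1N N * P N = H1N N * P N ∧ P N * H2N N * P N = H2N N * P N)
    (happrox0 : ∀ p : ℝ, 2 ≤ p →
      Tendsto (fun N => schattenNorm b p (H10 * P0 N - P0 N * H10)) atTop (𝓝 0) ∧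
      Tendsto (fun N => schattenNorm b p (H20 * P0 N - P0 N * H20)) atTop (𝓝 0) ∧
      Tendsto (fun N => schattenNorm b p (P0 N * H10 * P0 N - H10N N * P0 N)) atTop (𝓝 0) ∧
      Tendsto (fun N => schattenNorm b p (P0 N * H20 * P0 N - H20N N * P0 N)) atTop (𝓝 0))
    (happrox : ∀ p : ℝ, 2 ≤ p →
      Tendsto (fun N => schattenNorm b p (H1 * P N - P N * H1)) atTop (𝓝 0) ∧
      Tendsto (fun N => schattenNorm b p (H2 * P N - P N * H2)) atTop (𝓝 0) ∧
      Tendsto (fun N => schattenNorm b p (P N * H1 * P N - H1N N * P N)) atTop (𝓝 0) ∧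
      Tendsto (fun N => schattenNorm b p (P N * H2 * P N - H2N N * P N)) atTop (𝓝 0))
    : ∀ k l : ℕ, 1 ≤ k → 1 ≤ l → ∃ L : ℂ,
      Tendsto (fun N =>
          traceAlong b (P0 N * (H20 ^ k - H2 ^ k) * P N * (H1 ^ l - H10 ^ l) * P0 N))
        atTop (𝓝 L) ∧
      Tendsto (fun N =>
          traceAlong b (P0 N * (H20N N ^ k - H2N N ^ k) * P N *
            (H1N N ^ l - H10N N ^ l) * P0 N))
        atTop (𝓝 L) := by
  intro k l _ _
  obtain ⟨a1, a2, a3, a4⟩ := happrox0 2 le_rfl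
  obtain ⟨c1, c2, c3, c4⟩ := happrox 2 le_rfl
  have hX : hsn b (H20 ^ k - H2 ^ k) ≠ ⊤ := by
    refine pow_sub_ne_top b _ _ ?_ k
    rw [← neg_sub, hsn_neg]
    exact hsn_ne_top_of_summable b _ hV2
  have hY : hsn b (H1 ^ l - H10 ^ l) ≠ ⊤ :=
    pow_sub_ne_top b _ _ (hsn_ne_top_of_summable b _ hV1) l
  have hS := sandwich_tendsto b P0 P hP0proj hP0sa hP0lim hPproj hPsa hPlim _ hX
  have hT := sandwich_tendsto b P P0 hPproj hPsa hPlim hP0proj hP0sa hP0lim _ hY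
  have hS' := factor_tendsto b P0 P hP0proj hP0sa hPproj hPsa _ _
    (fun N => H20N N ^ k) (fun N => H2N N ^ k) hS
    (pow_approx b P0 hP0proj hP0sa hP0fin H20 H20N h20Nsa (fun N => (hsub0 N).2) a2 a4 k)
    (pow_approx' b P hPsa H2 h2sa H2N h2Nsa k
      (pow_approx b P hPproj hPsa hPfin H2 H2N h2Nsa (fun N => (hsub N).2) c2 c4 k))
  have hT' := factor_tendsto b P P0 hPproj hPsa hP0proj hP0sa _ _
    (fun N => H1N N ^ l) (fun N => H10N N ^ l) hT
    (pow_approx b P hPproj hPsa hPfin H1 H1N h1Nsa (fun N => (hsub N).1) c1 c3 l)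
    (pow_approx' b P0 hP0sa H10 h10sa H10N h10Nsa l
      (pow_approx b P0 hP0proj hP0sa hP0fin H10 H10N h10Nsa (fun N => (hsub0 N).1) a1 a3 l))
  refine ⟨traceAlong b ((H20 ^ k - H2 ^ k) * (H1 ^ l - H10 ^ l)), ?_, ?_⟩
  · refine (trace_tendsto b _ _ _ _ hX hY hS hT).congr fun N => ?_
    congr 1
    simp only [mul_assoc]
    rw [← mul_assoc (P N) (P N), hPproj N]
  · refine (trace_tendsto b _ _ _ _ hX hY hS' hT').congr fun N => ?_
    congr 1
    simp only [mul_assoc]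
    rw [← mul_assoc (P N) (P N), hPproj N]

end
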